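/- The group W~ := W ∩ Aut(D~) equals {1} ∪ {v_j : α_j minuscule}; moreover W~ acts simply transitively on the set {−α₀} ∪ {α_j : α_j minuscule}, i.e., for any two elements β, γ of this set there is a unique w ∈ W~ with w(β) = γ. -/

import Mathlib

/-!
The argument rests on the simply transitive action of the Weyl group `W` on the bases of `Φ`.
It is transitive (`IsBase.weyl_transitive`) because every `W`-orbit meets the closed chamber of
each base, and a base is recovered from its chamber as the set of indecomposable positive roots.
It is free (`IsBase.weyl_free`) because `W` is generated by simple reflections and satisfies the
exchange condition (`IsBase.exchange`).

If `α j` is minuscule, every root has coordinate `-1`, `0` or `1` along `α j`. Hence replacing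
`α j` by `-α₀` gives another base (`IsHighestRoot.isBase_update`), whose highest root is `-α j`,
with the same coefficients `m`. So `v_j` exists, and it sends `-α₀` to `α j`
(`IsHighestRoot.map_neg_highest`); thus it preserves the extended diagram. Conversely an element
of `W` preserving the extended diagram either fixes `-α₀`, and is then trivial by freeness, or
sends it to some `α k`; applying it to `α₀ = ∑ m i α i` and comparing coordinates along `α k`
shows `m k = 1` (`IsHighestRoot.minuscule_of_map`). The orbit of `-α₀` is therefore the asserted
set and its stabiliser is trivial, which gives simple transitivity.
-/

open scoped RealInnerProductSpace

open scoped RealInnerProductSpace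

/-- The reflection `s_a` in the hyperplane orthogonal to `a`. -/
noncomputable def reflMap {V : Type*} [NormedAddCommGroup V] [InnerProductSpace ℝ V]
    (a x : V) : V :=
  x - (2 * ⟪a, x⟫ / ⟪a, a⟫) • a

/-- A reduced irreducible crystallographic root system in `V`. -/
structure IsRootSystem {V : Type*} [NormedAddCommGroup V] [InnerProductSpace ℝ V]
    (Φ : Set V) : Prop where
  finite : Φ.Finite
  spans : Submodule.span ℝ Φ = ⊤
  not_zero : (0 : V) ∉ Φ
  reduced : ∀ a ∈ Φ, ∀ t : ℝ, t • a ∈ Φ → t = 1 ∨ t = -1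
  refl_mem : ∀ a ∈ Φ, ∀ b ∈ Φ, reflMap a b ∈ Φ
  crystallographic : ∀ a ∈ Φ, ∀ b ∈ Φ, ∃ k : ℤ, 2 * ⟪a, b⟫ / ⟪a, a⟫ = (k : ℝ)
  irreducible : ¬ ∃ Φ₁ Φ₂ : Set V, Φ₁.Nonempty ∧ Φ₂.Nonempty ∧ Φ₁ ∪ Φ₂ = Φ ∧
    ∀ a ∈ Φ₁, ∀ b ∈ Φ₂, ⟪a, b⟫ = 0

/-- `α : Fin n → V` is a base (system of simple roots) of `Φ`. -/
structure IsBase {V : Type*} [NormedAddCommGroup V] [InnerProductSpace ℝ V]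
    (Φ : Set V) {n : ℕ} (α : Fin n → V) : Prop where
  mem : ∀ i, α i ∈ Φ
  indep : LinearIndependent ℝ α
  spans : Submodule.span ℝ (Set.range α) = ⊤
  int_comb : ∀ β ∈ Φ, ∃ c : Fin n → ℤ,
    β = ∑ i, (c i : ℝ) • α i ∧ ((∀ i, 0 ≤ c i) ∨ (∀ i, c i ≤ 0))

/-- `α₀ = ∑ mᵢ αᵢ` is the highest root of `Φ` w.r.t. the base `α`. -/
structure IsHighestRoot {V : Type*} [NormedAddCommGroup V] [InnerProductSpace ℝ V]
    (Φ : Set V) {n : ℕ} (α : Fin n → V) (m : Fin n → ℕ) (α₀ : V) : Prop where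
  pos : ∀ i, 0 < m i
  mem : α₀ ∈ Φ
  eq : α₀ = ∑ i, (m i : ℝ) • α i
  highest : ∀ β ∈ Φ, ∀ c : Fin n → ℤ, β = ∑ i, (c i : ℝ) • α i → ∀ i, c i ≤ (m i : ℤ)

/-- The Weyl group of `Φ`, generated by the reflections in the roots. -/
noncomputable def WeylGroup {V : Type*} [NormedAddCommGroup V] [InnerProductSpace ℝ V]
    (Φ : Set V) : Subgroup (V ≃ₗᵢ[ℝ] V) :=
  Subgroup.closure {w : V ≃ₗᵢ[ℝ] V | ∃ a ∈ Φ, ∀ x, w x = reflMap a x}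

/-- The fundamental alcove. -/
def alcove {V : Type*} [NormedAddCommGroup V] [InnerProductSpace ℝ V]
    {n : ℕ} (α : Fin n → V) (α₀ : V) : Set V :=
  {x | (∀ i, 0 ≤ ⟪α i, x⟫) ∧ ⟪α₀, x⟫ ≤ 1}

/-- The coweight lattice `P^∨`. -/
def coweightLattice {V : Type*} [NormedAddCommGroup V] [InnerProductSpace ℝ V]
    (Φ : Set V) : Set V :=
  {ω | ∀ a ∈ Φ, ∃ k : ℤ, ⟪ω, a⟫ = (k : ℝ)}

/-- The coroot lattice `Q^∨`: the `ℤ`-span of the coroots. -/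
def corootLattice {V : Type*} [NormedAddCommGroup V] [InnerProductSpace ℝ V]
    (Φ : Set V) : Set V :=
  (Submodule.span ℤ ((fun a : V => (2 / ⟪a, a⟫) • a) '' Φ) : Set V)

/-- The extended affine Weyl group `W_ext = {t_γ ∘ w : γ ∈ P^∨, w ∈ W}` inside `E(V)`. -/
noncomputable def extendedWeylGroup {V : Type*} [NormedAddCommGroup V] [InnerProductSpace ℝ V]
    (Φ : Set V) : Set (V ≃ᵃⁱ[ℝ] V) :=
  {ζ | ∃ γ ∈ coweightLattice Φ, ∃ w ∈ WeylGroup Φ, ∀ x, ζ x = w x + γ}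

/-- The affine Weyl group `W_aff = {t_γ ∘ w : γ ∈ Q^∨, w ∈ W}` inside `E(V)`. -/
noncomputable def affineWeylGroup {V : Type*} [NormedAddCommGroup V] [InnerProductSpace ℝ V]
    (Φ : Set V) : Set (V ≃ᵃⁱ[ℝ] V) :=
  {ζ | ∃ γ ∈ corootLattice Φ, ∃ w ∈ WeylGroup Φ, ∀ x, ζ x = w x + γ}

/-- The fundamental group `Ω`: the stabilizer of the alcove in `W_ext`. -/
noncomputable def fundGroup {V : Type*} [NormedAddCommGroup V] [InnerProductSpace ℝ V]
    (Φ : Set V) {n : ℕ} (α : Fin n → V) (α₀ : V) : Set (V ≃ᵃⁱ[ℝ] V) :=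
  {ζ | ζ ∈ extendedWeylGroup Φ ∧ ζ '' alcove α α₀ = alcove α α₀}

/-- The Komrakov–Premet polytope. -/
def kpPolytope {V : Type*} [NormedAddCommGroup V] [InnerProductSpace ℝ V]
    {n : ℕ} (α : Fin n → V) (m : Fin n → ℕ) (α₀ : V) : Set V :=
  {x ∈ alcove α α₀ | ∀ j, m j = 1 → ⟪α₀ + α j, x⟫ ≤ 1}

section Helpers

variable {V : Type*} [NormedAddCommGroup V] [InnerProductSpace ℝ V]
  {Φ : Set V} {n : ℕ} {α : Fin n → V}

/-! ### Coordinates with respect to a base -/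

/-- The simple roots as a basis of `V`; the coordinate of `v` along `α i` is
`hα.basis.repr v i`. -/
noncomputable def IsBase.basis (hα : IsBase Φ α) : Module.Basis (Fin n) ℝ V :=
  Module.Basis.mk hα.indep hα.spans.ge

lemma IsBase.basis_apply (hα : IsBase Φ α) (i : Fin n) : hα.basis i = α i := by
  simp [IsBase.basis]

lemma IsBase.sum_repr (hα : IsBase Φ α) (v : V) : ∑ i, hα.basis.repr v i • α i = v := by
  simpa [hα.basis_apply] using hα.basis.sum_repr v

lemma IsBase.repr_sum (hα : IsBase Φ α) (c : Fin n → ℝ) (i : Fin n) :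
    hα.basis.repr (∑ i, c i • α i) i = c i := by
  have := hα.basis.repr_sum_self c
  simp only [hα.basis_apply] at this
  rw [this]

lemma IsBase.repr_self (hα : IsBase Φ α) (i k : Fin n) :
    hα.basis.repr (α i) k = if i = k then 1 else 0 := by
  rw [← hα.basis_apply i, hα.basis.repr_self, Finsupp.single_apply]

lemma IsBase.repr_int (hα : IsBase Φ α) {β : V} (hβ : β ∈ Φ) (i : Fin n) :
    ∃ k : ℤ, hα.basis.repr β i = k := by
  obtain ⟨c, hc, -⟩ := hα.int_comb β hβ
  refine ⟨c i, ?_⟩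
  rw [hc, hα.repr_sum]

/-- `v` has nonnegative coordinates in the base `α`; for a root `v`, this says `v` is positive. -/
def IsBase.IsPos (hα : IsBase Φ α) (v : V) : Prop := ∀ i, 0 ≤ hα.basis.repr v i

lemma IsBase.pos_or_neg (hα : IsBase Φ α) {β : V} (hβ : β ∈ Φ) :
    hα.IsPos β ∨ hα.IsPos (-β) := by
  obtain ⟨c, hc, h | h⟩ := hα.int_comb β hβ
  · left
    intro i
    rw [hc, hα.repr_sum]
    exact_mod_cast h i
  · right
    intro i
    rw [map_neg, hc, Finsupp.neg_apply, hα.repr_sum]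
    have : (c i : ℝ) ≤ 0 := by exact_mod_cast h i
    linarith

lemma IsBase.not_pos_neg (hα : IsBase Φ α) (hΦ : IsRootSystem Φ) {β : V} (hβ : β ∈ Φ)
    (h : hα.IsPos β) : ¬ hα.IsPos (-β) := by
  intro h'
  have : β = 0 := by
    rw [← hα.sum_repr β]
    refine Finset.sum_eq_zero fun i _ => ?_
    have h1 := h i
    have h2 := h' i
    rw [map_neg, Finsupp.neg_apply] at h2
    rw [show hα.basis.repr β i = 0 by linarith, zero_smul]
  exact hΦ.not_zero (this ▸ hβ)

lemma IsBase.pos_self (hα : IsBase Φ α) (i : Fin n) : hα.IsPos (α i) := by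
  intro k
  rw [hα.repr_self]
  split_ifs <;> norm_num

/-- A vector `y` in the open chamber of `α` has positive inner product with every positive root. -/
lemma IsBase.inner_pos (hα : IsBase Φ α) (hΦ : IsRootSystem Φ) {y : V}
    (hy : ∀ i, 0 < ⟪α i, y⟫) {β : V} (hβ : β ∈ Φ) (h : hα.IsPos β) : 0 < ⟪β, y⟫ := by
  have hex : ∃ i, 0 < hα.basis.repr β i := by
    by_contra! hc
    refine hα.not_pos_neg hΦ hβ h fun i => ?_
    rw [map_neg, Finsupp.neg_apply]
    linarith [hc i]
  obtain ⟨i, hi⟩ := hex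
  rw [← hα.sum_repr β, sum_inner]
  refine Finset.sum_pos' (fun k _ => ?_) ⟨i, Finset.mem_univ _, ?_⟩
  · rw [real_inner_smul_left]
    exact mul_nonneg (h k) (hy k).le
  · rw [real_inner_smul_left]
    exact mul_pos hi (hy i)

lemma IsBase.inner_ne_zero (hα : IsBase Φ α) (hΦ : IsRootSystem Φ) {y : V}
    (hy : ∀ i, 0 < ⟪α i, y⟫) {β : V} (hβ : β ∈ Φ) (hβ' : -β ∈ Φ) : ⟪β, y⟫ ≠ 0 := by
  rcases hα.pos_or_neg hβ with h | h
  · exact (hα.inner_pos hΦ hy hβ h).ne'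
  · have := hα.inner_pos hΦ hy hβ' h
    rw [inner_neg_left] at this
    linarith

lemma IsBase.isPos_of_inner (hα : IsBase Φ α) (hΦ : IsRootSystem Φ) {y : V}
    (hy : ∀ i, 0 < ⟪α i, y⟫) {β : V} (hβ : β ∈ Φ) (hβ' : -β ∈ Φ) (h : 0 < ⟪β, y⟫) :
    hα.IsPos β := by
  rcases hα.pos_or_neg hβ with h1 | h1
  · exact h1
  · have := hα.inner_pos hΦ hy hβ' h1
    rw [inner_neg_left] at this
    linarith

/-- The open chamber of a base is nonempty: it contains the vector `y` with all `⟪α i, y⟫ = 1`. -/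
lemma IsBase.exists_chamber [FiniteDimensional ℝ V] (hα : IsBase Φ α) :
    ∃ y : V, ∀ i, 0 < ⟪α i, y⟫ := by
  have : CompleteSpace V := FiniteDimensional.complete ℝ V
  refine ⟨(InnerProductSpace.toDual ℝ V).symm
    (LinearMap.toContinuousLinearMap (hα.basis.constr ℝ fun _ => (1 : ℝ))), fun i => ?_⟩
  rw [real_inner_comm, InnerProductSpace.toDual_symm_apply]
  have := hα.basis.constr_basis ℝ (fun _ => (1 : ℝ)) i
  rw [hα.basis_apply] at this
  simp [this]

/-! ### Reflections and the Weyl group -/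

/-- The reflection `s_a` as a linear isometry. -/
noncomputable def sref (a : V) : V ≃ₗᵢ[ℝ] V := (ℝ ∙ a)ᗮ.reflection

lemma sref_apply (a x : V) : sref a x = reflMap a x := by
  rw [sref, Submodule.reflection_orthogonal_apply, Submodule.reflection_singleton_apply, reflMap,
    real_inner_self_eq_norm_sq, neg_sub]
  congr 1
  rw [two_smul, ← add_smul]
  congr 1
  simp
  ring

lemma sref_mul_self (a : V) : sref a * sref a = 1 := by
  ext x
  change sref a (sref a x) = x
  simp [sref]

lemma sref_inv (a : V) : (sref a)⁻¹ = sref a :=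
  inv_eq_of_mul_eq_one_left (sref_mul_self a)

lemma sref_conj (w : V ≃ₗᵢ[ℝ] V) (a : V) : sref (w a) = w * sref a * w⁻¹ := by
  ext x
  have hx : w (w⁻¹ x) = x := w.apply_symm_apply x
  have hi : ⟪w a, x⟫ = ⟪a, w⁻¹ x⟫ := by
    rw [← LinearIsometryEquiv.inner_map_map w a (w⁻¹ x), hx]
  change _ = w (sref a (w⁻¹ x))
  rw [sref_apply, sref_apply, reflMap, reflMap, map_sub, map_smul, hx, hi,
    LinearIsometryEquiv.inner_map_map]

lemma sref_neg (a : V) : sref (-a) = sref a := by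
  ext x
  rw [sref_apply, sref_apply, reflMap, reflMap, inner_neg_left, inner_neg_neg, smul_neg,
    ← neg_smul]
  congr 2
  ring

lemma sref_self (a : V) (ha : a ≠ 0) : sref a a = -a := by
  rw [sref_apply, reflMap, mul_div_assoc, div_self (inner_self_ne_zero.2 ha), mul_one, two_smul]
  abel

lemma IsRootSystem.ne_zero (hΦ : IsRootSystem Φ) {a : V} (ha : a ∈ Φ) : a ≠ 0 :=
  fun h => hΦ.not_zero (h ▸ ha)

lemma IsRootSystem.neg_mem (hΦ : IsRootSystem Φ) {a : V} (ha : a ∈ Φ) : -a ∈ Φ := by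
  rw [← sref_self a (hΦ.ne_zero ha), sref_apply]
  exact hΦ.refl_mem a ha a ha

lemma sref_mem_weyl {a : V} (ha : a ∈ Φ) : sref a ∈ WeylGroup Φ :=
  Subgroup.subset_closure ⟨a, ha, sref_apply a⟩

lemma IsRootSystem.weyl_mem (hΦ : IsRootSystem Φ) {w : V ≃ₗᵢ[ℝ] V} (hw : w ∈ WeylGroup Φ) :
    ∀ β ∈ Φ, w β ∈ Φ := by
  -- Inverses are covered because each generating reflection is an involution.
  refine Subgroup.closure_induction'' (p := fun w _ => ∀ β ∈ Φ, w β ∈ Φ) ?_ ?_ ?_ ?_ hw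
  · rintro w ⟨a, ha, h⟩ β hβ
    rw [h]
    exact hΦ.refl_mem a ha β hβ
  · rintro w ⟨a, ha, h⟩ β hβ
    have : w = sref a := by
      ext x
      rw [h, sref_apply]
    rw [this, sref_inv, sref_apply]
    exact hΦ.refl_mem a ha β hβ
  · intro β hβ
    exact hβ
  · intro u v _ _ hu hv β hβ
    exact hu _ (hv β hβ)

lemma IsBase.weyl_finite (hα : IsBase Φ α) (hΦ : IsRootSystem Φ) :
    (WeylGroup Φ : Set (V ≃ₗᵢ[ℝ] V)).Finite := by
  have hfin : (Set.pi Set.univ fun _ : Fin n => Φ).Finite := Set.Finite.pi fun _ => hΦ.finite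
  refine Set.Finite.of_finite_image (f := fun w : V ≃ₗᵢ[ℝ] V => fun i => w (α i))
    (hfin.subset ?_) ?_
  · rintro _ ⟨w, hw, rfl⟩ i _
    exact hΦ.weyl_mem hw _ (hα.mem i)
  · intro u _ v _ huv
    have : u.toLinearEquiv.toLinearMap = v.toLinearEquiv.toLinearMap := by
      refine hα.basis.ext fun i => ?_
      rw [hα.basis_apply]
      exact congrFun huv i
    ext x
    exact LinearMap.congr_fun this x

lemma IsBase.repr_sref (hα : IsBase Φ α) (i : Fin n) (v : V) (k : Fin n) :
    hα.basis.repr (sref (α i) v) k =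
      hα.basis.repr v k - (2 * ⟪α i, v⟫ / ⟪α i, α i⟫) * (if i = k then 1 else 0) := by
  rw [sref_apply, reflMap, map_sub, map_smul, Finsupp.sub_apply, Finsupp.smul_apply,
    hα.repr_self, smul_eq_mul]

/-- A positive root all of whose coordinates away from `i` vanish is `α i`. -/
lemma IsBase.eq_simple (hα : IsBase Φ α) (hΦ : IsRootSystem Φ) {β : V} (hβ : β ∈ Φ)
    (h : hα.IsPos β) (i : Fin n) (hz : ∀ k, k ≠ i → hα.basis.repr β k = 0) : β = α i := by
  have e : β = hα.basis.repr β i • α i := by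
    conv_lhs => rw [← hα.sum_repr β]
    refine Finset.sum_eq_single i (fun k _ hk => ?_) (by simp)
    rw [hz k hk, zero_smul]
  rcases hΦ.reduced (α i) (hα.mem i) (hα.basis.repr β i) (e ▸ hβ) with h1 | h1
  · rw [e, h1, one_smul]
  · have := h i
    linarith

/-- The simple reflection `s_i` permutes the positive roots other than `α i`. -/
lemma IsBase.sref_pos (hα : IsBase Φ α) (hΦ : IsRootSystem Φ) {β : V} (hβ : β ∈ Φ)
    (h : hα.IsPos β) (i : Fin n) (hne : β ≠ α i) : hα.IsPos (sref (α i) β) := by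
  have hex : ∃ k, k ≠ i ∧ hα.basis.repr β k ≠ 0 := by
    by_contra! hc
    exact hne (hα.eq_simple hΦ hβ h i hc)
  obtain ⟨k, hk, hk0⟩ := hex
  have hs := hΦ.weyl_mem (sref_mem_weyl (hα.mem i)) β hβ
  rcases hα.pos_or_neg hs with h1 | h1
  · exact h1
  · exfalso
    have h2 := h1 k
    rw [map_neg, Finsupp.neg_apply, hα.repr_sref, if_neg hk.symm] at h2
    have h3 := h k
    exact hk0 (by linarith)

/-! ### Freeness of the Weyl group on bases -/

/-- The product of the simple reflections indexed by a word. -/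
noncomputable def wordProd (α : Fin n → V) (L : List (Fin n)) : V ≃ₗᵢ[ℝ] V :=
  (L.map fun i => sref (α i)).prod

lemma wordProd_append (L M : List (Fin n)) :
    wordProd α (L ++ M) = wordProd α L * wordProd α M := by
  simp [wordProd]

lemma wordProd_cons (i : Fin n) (L : List (Fin n)) :
    wordProd α (i :: L) = sref (α i) * wordProd α L := by
  simp [wordProd]

lemma wordProd_reverse (L : List (Fin n)) : wordProd α L.reverse = (wordProd α L)⁻¹ := by
  induction L with
  | nil => simp [wordProd]
  | cons i L ih =>
    rw [List.reverse_cons, wordProd_append, ih, wordProd_cons, wordProd_cons, mul_inv_rev,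
      sref_inv]
    simp [wordProd]

lemma IsBase.wordProd_mem (hα : IsBase Φ α) (L : List (Fin n)) :
    wordProd α L ∈ WeylGroup Φ := by
  induction L with
  | nil => exact one_mem _
  | cons i L ih =>
    rw [wordProd_cons]
    exact mul_mem (sref_mem_weyl (hα.mem i)) ih

/-- Every positive root is conjugate to a simple one under simple reflections, by induction on
the height `∑ i, repr β i`. -/
lemma IsBase.exists_word_simple (hα : IsBase Φ α) (hΦ : IsRootSystem Φ) (N : ℕ) :
    ∀ β ∈ Φ, hα.IsPos β → ∑ i, hα.basis.repr β i ≤ N →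
      ∃ (L : List (Fin n)) (i : Fin n), wordProd α L (α i) = β := by
  induction N with
  | zero =>
    intro β hβ hp hN
    exfalso
    refine hα.not_pos_neg hΦ hβ hp fun i => ?_
    have h1 := Finset.single_le_sum (fun k _ => hp k) (Finset.mem_univ i)
    rw [map_neg, Finsupp.neg_apply]
    simp only [Nat.cast_zero] at hN
    linarith
  | succ N ih =>
    intro β hβ hp hN
    obtain ⟨i, hi⟩ : ∃ i, 0 < ⟪α i, β⟫ := by
      by_contra! hc
      have h1 : 0 < ⟪β, β⟫ := real_inner_self_pos.2 (hΦ.ne_zero hβ)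
      have h2 : ⟪β, β⟫ = ∑ k, hα.basis.repr β k * ⟪α k, β⟫ := by
        conv_lhs =>
          arg 2
          rw [← hα.sum_repr β]
        rw [sum_inner]
        simp only [real_inner_smul_left]
      have h3 : ∑ k, hα.basis.repr β k * ⟪α k, β⟫ ≤ 0 :=
        Finset.sum_nonpos fun k _ => mul_nonpos_of_nonneg_of_nonpos (hp k) (hc k)
      linarith
    by_cases hne : β = α i
    · exact ⟨[], i, hne.symm⟩
    · have hs := hΦ.weyl_mem (sref_mem_weyl (hα.mem i)) β hβ
      obtain ⟨k, hk⟩ := hΦ.crystallographic _ (hα.mem i) β hβ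
      have hk1 : (1 : ℝ) ≤ k := by
        have : (0 : ℝ) < k := by
          rw [← hk]
          exact div_pos (by linarith) (real_inner_self_pos.2 (hΦ.ne_zero (hα.mem i)))
        exact_mod_cast this
      obtain ⟨L, j, hL⟩ := ih _ hs (hα.sref_pos hΦ hβ hp i hne) (by
        simp only [hα.repr_sref, hk, Finset.sum_sub_distrib]
        simp only [mul_ite, mul_one, mul_zero, Finset.sum_ite_eq, Finset.mem_univ, if_true]
        push_cast at hN
        linarith)
      refine ⟨i :: L, j, ?_⟩
      rw [wordProd_cons]
      change sref (α i) (wordProd α L (α j)) = β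
      rw [hL]
      exact LinearIsometryEquiv.congr_fun (sref_mul_self (α i)) β

lemma IsBase.exists_word (hα : IsBase Φ α) (hΦ : IsRootSystem Φ) {w : V ≃ₗᵢ[ℝ] V}
    (hw : w ∈ WeylGroup Φ) : ∃ L, wordProd α L = w := by
  have key : ∀ a ∈ Φ, hα.IsPos a → ∃ L, wordProd α L = sref a := by
    intro a ha hp
    obtain ⟨N, hN⟩ := exists_nat_ge (∑ i, hα.basis.repr a i)
    obtain ⟨L, i, h⟩ := hα.exists_word_simple hΦ N a ha hp hN
    refine ⟨L ++ (i :: L.reverse), ?_⟩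
    rw [← h, sref_conj, wordProd_append, wordProd_cons, wordProd_reverse, mul_assoc]
  refine Subgroup.closure_induction (p := fun w _ => ∃ L, wordProd α L = w) ?_ ?_ ?_ ?_ hw
  · rintro w ⟨a, ha, h⟩
    have : w = sref a := by
      ext x
      rw [h, sref_apply]
    rw [this]
    rcases hα.pos_or_neg ha with h1 | h1
    · exact key a ha h1
    · rw [← sref_neg]
      exact key _ (hΦ.neg_mem ha) h1
  · exact ⟨[], rfl⟩
  · rintro _ _ _ _ ⟨L, rfl⟩ ⟨M, rfl⟩
    exact ⟨L ++ M, wordProd_append L M⟩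
  · rintro _ _ ⟨L, rfl⟩
    exact ⟨L.reverse, wordProd_reverse L⟩

/-- The exchange condition: if a word sends `α i` to a negative root, then multiplying on the
right by `s_i` amounts to deleting a letter. -/
lemma IsBase.exchange (hα : IsBase Φ α) (hΦ : IsRootSystem Φ) (i : Fin n) (L : List (Fin n)) :
    hα.IsPos (-(wordProd α L (α i))) →
      ∃ M : List (Fin n), M.length < L.length ∧ wordProd α M = wordProd α L * sref (α i) := by
  induction L with
  | nil =>
    intro h
    exact absurd h (hα.not_pos_neg hΦ (hα.mem i) (hα.pos_self i))
  | cons a L ih =>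
    intro h
    have hm := hΦ.weyl_mem (hα.wordProd_mem L) _ (hα.mem i)
    rcases hα.pos_or_neg hm with h1 | h1
    · -- The sign changes at the letter `a`, which forces `L (α i) = α a`.
      have h2 : wordProd α L (α i) = α a := by
        by_contra hne
        have h3 := hα.sref_pos hΦ hm h1 a hne
        refine hα.not_pos_neg hΦ (hΦ.weyl_mem (sref_mem_weyl (hα.mem a)) _ hm) h3 ?_
        rwa [wordProd_cons] at h
      refine ⟨L, by simp, ?_⟩
      have h4 := sref_conj (wordProd α L) (α i)
      rw [h2] at h4
      have h5 : sref (α a) * wordProd α L = wordProd α L * sref (α i) := by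
        rw [h4]
        group
      rw [wordProd_cons, h5, mul_assoc, sref_mul_self, mul_one]
    · obtain ⟨M, hM, e⟩ := ih h1
      refine ⟨a :: M, by simpa using hM, ?_⟩
      rw [wordProd_cons, wordProd_cons, e, mul_assoc]

lemma IsBase.word_eq_one (hα : IsBase Φ α) (hΦ : IsRootSystem Φ) (N : ℕ) :
    ∀ L : List (Fin n), L.length ≤ N → (∀ i, hα.IsPos (wordProd α L (α i))) →
      wordProd α L = 1 := by
  induction N with
  | zero =>
    intro L hL _
    rw [List.length_eq_zero_iff.1 (Nat.le_zero.1 hL)]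
    rfl
  | succ N ih =>
    intro L hL hp
    rcases List.eq_nil_or_concat L with rfl | ⟨L', i, rfl⟩
    · rfl
    · rw [List.concat_eq_append] at *
      have e : wordProd α (L' ++ [i]) = wordProd α L' * sref (α i) := by
        simp [wordProd]
      have h1 : hα.IsPos (-(wordProd α L' (α i))) := by
        have := hp i
        rw [e] at this
        change hα.IsPos (wordProd α L' (sref (α i) (α i))) at this
        rwa [sref_self _ (hΦ.ne_zero (hα.mem i)), map_neg] at this
      obtain ⟨M, hM, eM⟩ := hα.exchange hΦ i L' h1
      rw [← e] at eM
      rw [← eM] at hp ⊢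
      refine ih M ?_ hp
      simp at hL
      omega

/-- A Weyl group element stabilising the base is trivial. -/
lemma IsBase.weyl_free (hα : IsBase Φ α) (hΦ : IsRootSystem Φ) {w : V ≃ₗᵢ[ℝ] V}
    (hw : w ∈ WeylGroup Φ) (h : ⇑w '' Set.range α = Set.range α) : w = 1 := by
  obtain ⟨L, rfl⟩ := hα.exists_word hΦ hw
  refine hα.word_eq_one hΦ L.length L le_rfl fun i => ?_
  have : wordProd α L (α i) ∈ Set.range α := h ▸ Set.mem_image_of_mem _ ⟨i, rfl⟩
  obtain ⟨k, hk⟩ := this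
  rw [← hk]
  exact hα.pos_self k

/-! ### Transitivity of the Weyl group on bases -/

lemma IsBase.map {b : Fin n → V} (hb : IsBase Φ b) (hΦ : IsRootSystem Φ) {w : V ≃ₗᵢ[ℝ] V}
    (hw : w ∈ WeylGroup Φ) : IsBase Φ (fun i => w (b i)) where
  mem i := hΦ.weyl_mem hw _ (hb.mem i)
  indep := hb.indep.map' w.toLinearEquiv.toLinearMap (LinearEquiv.ker _)
  spans := by
    have : Set.range (fun i => w (b i)) = w.toLinearEquiv.toLinearMap '' Set.range b := by
      rw [← Set.range_comp]
      rfl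
    rw [this, Submodule.span_image, hb.spans, Submodule.map_top]
    exact LinearEquiv.range _
  int_comb β hβ := by
    obtain ⟨c, hc, hs⟩ := hb.int_comb (w⁻¹ β) (hΦ.weyl_mem (inv_mem hw) β hβ)
    refine ⟨c, ?_, hs⟩
    have : w (w⁻¹ β) = β := w.apply_symm_apply β
    rw [← this, hc, map_sum]
    simp only [map_smul]

/-- Two bases whose open chambers meet coincide: a simple root of the one is an indecomposable
positive root, hence simple for the other. -/
lemma IsBase.range_subset {b : Fin n → V} (hα : IsBase Φ α) (hb : IsBase Φ b)
    (hΦ : IsRootSystem Φ) {y : V} (h1 : ∀ i, 0 < ⟪α i, y⟫) (h2 : ∀ i, 0 < ⟪b i, y⟫) :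
    Set.range α ⊆ Set.range b := by
  rintro _ ⟨i, rfl⟩
  have hpb : hb.IsPos (α i) :=
    hb.isPos_of_inner hΦ h2 (hα.mem i) (hΦ.neg_mem (hα.mem i)) (h1 i)
  have hpa : ∀ k, hα.IsPos (b k) := fun k =>
    hα.isPos_of_inner hΦ h1 (hb.mem k) (hΦ.neg_mem (hb.mem k)) (h2 k)
  obtain ⟨k, hk⟩ : ∃ k, 0 < hb.basis.repr (α i) k := by
    by_contra! hc
    refine hb.not_pos_neg hΦ (hα.mem i) hpb fun k => ?_
    rw [map_neg, Finsupp.neg_apply]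
    linarith [hc k]
  refine ⟨k, hα.eq_simple hΦ (hb.mem k) (hpa k) i fun l hl => ?_⟩
  -- Compare the coordinates along `α l` of the expansion of `α i` in the base `b`.
  have e : ∑ k, hb.basis.repr (α i) k * hα.basis.repr (b k) l = 0 := by
    have := congrArg (fun v => hα.basis.repr v l) (hb.sum_repr (α i))
    simpa [map_sum, hα.repr_self, hl.symm, Finsupp.finsetSum_apply] using this
  have h0 := (Finset.sum_eq_zero_iff_of_nonneg
    (fun k _ => mul_nonneg (hpb k) (hpa k l))).1 e k (Finset.mem_univ k)
  exact (mul_eq_zero.1 h0).resolve_left hk.ne'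

lemma IsBase.weyl_transitive [FiniteDimensional ℝ V] {b : Fin n → V} (hα : IsBase Φ α)
    (hb : IsBase Φ b) (hΦ : IsRootSystem Φ) :
    ∃ w ∈ WeylGroup Φ, ⇑w '' Set.range α = Set.range b := by
  obtain ⟨x, hx⟩ := hα.exists_chamber
  obtain ⟨r, hr⟩ := hb.exists_chamber
  -- The point of the orbit of `x` with the largest inner product with `r` is `b`-dominant.
  obtain ⟨w, hw, hmax⟩ := Set.exists_max_image _ (fun w : V ≃ₗᵢ[ℝ] V => ⟪w x, r⟫)
    (hα.weyl_finite hΦ) ⟨1, one_mem _⟩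
  have hα' := hα.map hΦ hw
  have h1 : ∀ i, 0 < ⟪w (α i), w x⟫ := fun i => by
    rw [LinearIsometryEquiv.inner_map_map]
    exact hx i
  have h2 : ∀ i, 0 < ⟪b i, w x⟫ := by
    intro i
    refine lt_of_le_of_ne ?_
      (hα'.inner_ne_zero hΦ h1 (hb.mem i) (hΦ.neg_mem (hb.mem i))).symm
    have h3 := hmax (sref (b i) * w) (mul_mem (sref_mem_weyl (hb.mem i)) hw)
    change ⟪sref (b i) (w x), r⟫ ≤ ⟪w x, r⟫ at h3
    rw [sref_apply, reflMap, inner_sub_left, real_inner_smul_left] at h3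
    by_contra! hlt
    have h4 : 2 * ⟪b i, w x⟫ / ⟪b i, b i⟫ < 0 :=
      div_neg_of_neg_of_pos (by linarith) (real_inner_self_pos.2 (hΦ.ne_zero (hb.mem i)))
    have := mul_neg_of_neg_of_pos h4 (hr i)
    linarith
  refine ⟨w, hw, ?_⟩
  rw [← Set.range_comp]
  exact Set.Subset.antisymm (hα'.range_subset hb hΦ h1 h2) (hb.range_subset hα' hΦ h2 h1)

/-! ### Exchanging a minuscule simple root for the lowest root -/

variable {m : Fin n → ℕ} {α₀ : V}

lemma IsHighestRoot.repr_eq (h₀ : IsHighestRoot Φ α m α₀) (hα : IsBase Φ α) (i : Fin n) :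
    hα.basis.repr α₀ i = m i := by
  rw [h₀.eq, hα.repr_sum]

lemma IsHighestRoot.neg_ne (h₀ : IsHighestRoot Φ α m α₀) (hα : IsBase Φ α) (i : Fin n) :
    -α₀ ≠ α i := by
  intro h
  have h1 := congrArg (fun v => hα.basis.repr v i) h
  simp only [map_neg, Finsupp.neg_apply, h₀.repr_eq, hα.repr_self, if_true] at h1
  have : (0 : ℝ) ≤ m i := Nat.cast_nonneg _
  linarith

/-- Since `α j = α₀ - ∑ i ≠ j, m i α i` for a minuscule `α j`, coordinates `c` with respect to
`α` become these coordinates after replacing `α j` by `-α₀`. -/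
lemma IsHighestRoot.sum_update (h₀ : IsHighestRoot Φ α m α₀) {j : Fin n} (hj : m j = 1)
    (c : Fin n → ℝ) :
    ∑ i, c i • α i =
      ∑ i, (if i = j then -c j else c i - c j * m i) • Function.update α j (-α₀) i := by
  have e : ∀ i, (if i = j then -c j else c i - c j * m i) • Function.update α j (-α₀) i =
      c i • α i - c j • ((m i : ℝ) • α i) + if i = j then c j • α₀ else 0 := by
    intro i
    by_cases h : i = j
    · subst h
      simp [hj]
    · simp only [h, if_false, Function.update_of_ne, ne_eq, not_false_eq_true]
      rw [sub_smul, mul_smul, add_zero]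
  rw [Finset.sum_congr rfl fun i _ => e i, Finset.sum_add_distrib, Finset.sum_sub_distrib,
    ← Finset.smul_sum, ← h₀.eq]
  simp

/-- A coordinate of a root along a minuscule simple root is `-1`, `0` or `1`, so by
`IsHighestRoot.sum_update` signs stay uniform after the exchange. -/
lemma IsHighestRoot.isBase_update (h₀ : IsHighestRoot Φ α m α₀) (hα : IsBase Φ α)
    (hΦ : IsRootSystem Φ) {j : Fin n} (hj : m j = 1) :
    IsBase Φ (Function.update α j (-α₀)) := by
  have hspan : ⊤ ≤ Submodule.span ℝ (Set.range (Function.update α j (-α₀))) := by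
    intro v _
    rw [← hα.sum_repr v, h₀.sum_update hj]
    exact Submodule.sum_mem _ fun i _ => Submodule.smul_mem _ _ (Submodule.subset_span ⟨i, rfl⟩)
  refine ⟨fun i => ?_, ?_, top_le_iff.1 hspan, fun β hβ => ?_⟩
  · by_cases h : i = j
    · subst h
      simpa using hΦ.neg_mem h₀.mem
    · simpa [h] using hα.mem i
  · exact linearIndependent_of_top_le_span_of_card_eq_finrank hspan
      (Module.finrank_eq_card_basis hα.basis).symm
  · obtain ⟨c, hc, hs⟩ := hα.int_comb β hβ
    refine ⟨fun i => if i = j then -c j else c i - c j * m i, ?_, ?_⟩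
    · rw [hc, h₀.sum_update hj]
      refine Finset.sum_congr rfl fun i _ => ?_
      push_cast
      rfl
    · have hup := h₀.highest β hβ c hc
      have hlo : ∀ i, -c i ≤ m i := h₀.highest (-β) (hΦ.neg_mem hβ) (fun i => -c i) (by
        rw [hc, ← Finset.sum_neg_distrib]
        refine Finset.sum_congr rfl fun i _ => ?_
        push_cast
        rw [neg_smul])
      have h1 := hup j
      have h2 := hlo j
      rw [hj] at h1 h2
      have h3 : c j = -1 ∨ c j = 0 ∨ c j = 1 := by
        push_cast at h1 h2
        omega
      rcases h3 with h | h | h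
      · left
        intro i
        have := hlo i
        dsimp only
        split_ifs <;> rw [h] <;> omega
      · simpa [h, ite_apply] using hs.imp
          (fun (h' : ∀ i, 0 ≤ c i) i => show 0 ≤ if i = j then 0 else c i by
            split_ifs <;> first | exact le_rfl | exact h' i)
          (fun (h' : ∀ i, c i ≤ 0) i => show (if i = j then 0 else c i) ≤ 0 by
            split_ifs <;> first | exact le_rfl | exact h' i)
      · right
        intro i
        have := hup i
        dsimp only
        split_ifs <;> rw [h] <;> omega

/-- `v_j` sends `-α₀` to `α j`: the coordinates of `v_j α₀` in the exchanged base are a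
permutation of `m`, and they are bounded by `m` since the highest root of that base is `-α j`, with
coordinates `m`; so they equal `m`. -/
lemma IsHighestRoot.map_neg_highest (h₀ : IsHighestRoot Φ α m α₀) (hα : IsBase Φ α)
    (hΦ : IsRootSystem Φ) {j : Fin n} (hj : m j = 1) {w : V ≃ₗᵢ[ℝ] V} (hw : w ∈ WeylGroup Φ)
    (hi : ⇑w '' Set.range α = Set.range (Function.update α j (-α₀))) : w (-α₀) = α j := by
  have hb := h₀.isBase_update hα hΦ hj
  have hσ : ∀ i, ∃ k, Function.update α j (-α₀) k = w (α i) := fun i =>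
    (hi ▸ Set.mem_image_of_mem _ ⟨i, rfl⟩ : w (α i) ∈ Set.range (Function.update α j (-α₀)))
  choose σ hσ using hσ
  have hinj : Function.Injective σ := by
    intro a b hab
    have := hσ a
    rw [hab, hσ b] at this
    exact (hα.indep.injective (w.injective this)).symm
  let τ : Fin n ≃ Fin n := Equiv.ofBijective σ (Finite.injective_iff_bijective.1 hinj)
  have e1 : w α₀ = ∑ k, (m (τ.symm k) : ℝ) • Function.update α j (-α₀) k := by
    rw [← Equiv.sum_comp τ, h₀.eq, map_sum]
    refine Finset.sum_congr rfl fun i _ => ?_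
    rw [map_smul, τ.symm_apply_apply, ← hσ i, ← h₀.eq]
    rfl
  have hmem := hΦ.weyl_mem hw _ h₀.mem
  obtain ⟨c, hc, -⟩ := hα.int_comb _ hmem
  have hup := h₀.highest _ hmem c hc
  have hlo : ∀ i, -c i ≤ m i := h₀.highest (-(w α₀)) (hΦ.neg_mem hmem) (fun i => -c i) (by
    rw [hc, ← Finset.sum_neg_distrib]
    refine Finset.sum_congr rfl fun i _ => ?_
    push_cast
    rw [neg_smul])
  have e2 : ∀ k, (m (τ.symm k) : ℤ) = if k = j then -c j else c k - c j * m k := by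
    intro k
    have h1 := congrArg (fun v => hb.basis.repr v k) e1
    simp only [hb.repr_sum] at h1
    rw [hc, h₀.sum_update hj, hb.repr_sum] at h1
    have h2 : ((m (τ.symm k) : ℤ) : ℝ) = ((if k = j then -c j else c k - c j * m k : ℤ) : ℝ) := by
      push_cast
      exact h1.symm
    exact_mod_cast h2
  -- The coordinate along `-α₀` is positive and at most `m j = 1`.
  have hcj : c j = -1 := by
    have h1 := e2 j
    rw [if_pos rfl] at h1
    have h2 := h₀.pos (τ.symm j)
    have h3 := hlo j
    rw [hj] at h3
    push_cast at h3
    omega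
  have hle : ∀ k, m (τ.symm k) ≤ m k := by
    intro k
    by_cases h : k = j
    · subst h
      have := e2 k
      rw [if_pos rfl] at this
      omega
    · -- Here the coordinate is `c k + m k`, and `c k ≤ 0` since `w α₀` is negative.
      have h1 := e2 k
      rw [if_neg h, hcj] at h1
      have h2 : c k ≤ 0 := by
        rcases hα.pos_or_neg hmem with h3 | h3
        · have h4 := h3 j
          rw [hc, hα.repr_sum, hcj] at h4
          norm_num at h4
        · have h4 := h3 k
          rw [map_neg, Finsupp.neg_apply, hc, hα.repr_sum] at h4
          have : (c k : ℝ) ≤ 0 := by linarith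
          exact_mod_cast this
      omega
  -- Both families have the same total, so the inequalities are equalities.
  have heq : ∀ k, m (τ.symm k) = m k := fun k =>
    (Finset.sum_eq_sum_iff_of_le fun k _ => hle k).1 (Equiv.sum_comp τ.symm m) k
      (Finset.mem_univ k)
  have hc0 : ∀ k, c k = if k = j then -1 else 0 := by
    intro k
    split_ifs with h
    · rw [h, hcj]
    · have h1 := e2 k
      rw [if_neg h, hcj, heq] at h1
      omega
  rw [map_neg, hc]
  simp [hc0]

lemma range_update_insert {X : Type*} (α : Fin n → X) (j : Fin n) (x : X) :
    insert (α j) (Set.range (Function.update α j x)) = insert x (Set.range α) := by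
  ext y
  simp only [Set.mem_insert_iff, Set.mem_range]
  constructor
  · rintro (rfl | ⟨i, rfl⟩)
    · exact Or.inr ⟨j, rfl⟩
    · by_cases h : i = j
      · subst h
        simp
      · exact Or.inr ⟨i, by simp [h]⟩
  · rintro (rfl | ⟨i, rfl⟩)
    · exact Or.inr ⟨j, by simp⟩
    · by_cases h : i = j
      · exact Or.inl (by rw [h])
      · exact Or.inr ⟨i, by simp [h]⟩

lemma IsHighestRoot.image_extended {j : Fin n} {w : V ≃ₗᵢ[ℝ] V}
    (hi : ⇑w '' Set.range α = Set.range (Function.update α j (-α₀))) (h : w (-α₀) = α j) :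
    ⇑w '' insert (-α₀) (Set.range α) = insert (-α₀) (Set.range α) := by
  rw [Set.image_insert_eq, hi, h, range_update_insert]

lemma insert_cancel {X : Type*} {a : X} {s t : Set X} (hs : a ∉ s) (ht : a ∉ t)
    (h : insert a s = insert a t) : s = t := by
  rw [← Set.insert_sdiff_self_of_notMem hs, h, Set.insert_sdiff_self_of_notMem ht]

lemma IsHighestRoot.notMem_image (h₀ : IsHighestRoot Φ α m α₀) (hα : IsBase Φ α)
    (w : V ≃ₗᵢ[ℝ] V) : w (-α₀) ∉ ⇑w '' Set.range α := by
  rintro ⟨_, ⟨i, rfl⟩, h⟩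
  exact h₀.neg_ne hα i (w.injective h).symm

lemma IsHighestRoot.eq_one (h₀ : IsHighestRoot Φ α m α₀) (hα : IsBase Φ α)
    (hΦ : IsRootSystem Φ) {w : V ≃ₗᵢ[ℝ] V} (hw : w ∈ WeylGroup Φ)
    (hi : ⇑w '' insert (-α₀) (Set.range α) = insert (-α₀) (Set.range α))
    (h : w (-α₀) = -α₀) : w = 1 := by
  refine hα.weyl_free hΦ hw (insert_cancel (a := -α₀) ?_ ?_ ?_)
  · have := h₀.notMem_image hα w
    rwa [h] at this
  · rintro ⟨i, hi⟩
    exact h₀.neg_ne hα i hi.symm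
  · rwa [Set.image_insert_eq, h] at hi

/-- A symmetry of the extended diagram moving `-α₀` to `α k` forces `α k` to be minuscule:
compare the coordinates along `α k` in `-α k = ∑ i, m i • w (α i)`, where the only term on the
right that has one is `-α₀`. -/
lemma IsHighestRoot.minuscule_of_map (h₀ : IsHighestRoot Φ α m α₀) (hα : IsBase Φ α)
    {w : V ≃ₗᵢ[ℝ] V} (hi : ⇑w '' insert (-α₀) (Set.range α) = insert (-α₀) (Set.range α))
    {k : Fin n} (h : w (-α₀) = α k) :
    m k = 1 ∧ ⇑w '' Set.range α = Set.range (Function.update α k (-α₀)) := by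
  constructor
  · obtain ⟨j, hj⟩ : ∃ j, w (α j) = -α₀ := by
      have : -α₀ ∈ ⇑w '' insert (-α₀) (Set.range α) := by
        rw [hi]
        exact Set.mem_insert _ _
      obtain ⟨x, rfl | ⟨j, rfl⟩, hx⟩ := this
      · exact absurd (hx.symm.trans h) (h₀.neg_ne hα k)
      · exact ⟨j, hx⟩
    have hother : ∀ i, i ≠ j → hα.basis.repr (w (α i)) k = 0 := by
      intro i hij
      have : w (α i) ∈ insert (-α₀) (Set.range α) :=
        hi ▸ Set.mem_image_of_mem _ (Set.mem_insert_of_mem _ ⟨i, rfl⟩)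
      rcases this with h1 | ⟨l, hl⟩
      · rw [← hj] at h1
        exact absurd (hα.indep.injective (w.injective h1)) hij
      · rw [← hl, hα.repr_self, if_neg]
        rintro rfl
        rw [← h] at hl
        exact h₀.neg_ne hα i (w.injective hl)
    have e : w α₀ = ∑ i, (m i : ℝ) • w (α i) := by
      conv_lhs => rw [h₀.eq]
      rw [map_sum]
      simp only [map_smul]
    have e1 := congrArg (fun v => hα.basis.repr v k) e
    have e2 : w α₀ = -α k := by rw [← h, map_neg, neg_neg]
    simp only [e2, map_sum, map_smul, Finsupp.finsetSum_apply, Finsupp.smul_apply] at e1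
    rw [Finset.sum_eq_single j (fun i _ hij => by rw [hother i hij, smul_zero]) (by simp), hj,
      map_neg, map_neg, Finsupp.neg_apply, Finsupp.neg_apply, hα.repr_self, h₀.repr_eq,
      if_pos rfl, smul_eq_mul] at e1
    have e3 : m j * m k = 1 := by
      have : (m j : ℝ) * m k = 1 := by linarith
      exact_mod_cast this
    exact Nat.eq_one_of_mul_eq_one_left e3
  · refine insert_cancel (a := α k) ?_ ?_ ?_
    · rw [← h]
      exact h₀.notMem_image hα w
    · rintro ⟨i, hik⟩
      by_cases hne : i = k
      · subst hne
        rw [Function.update_self] at hik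
        exact h₀.neg_ne hα i hik
      · rw [Function.update_of_ne hne] at hik
        exact hne (hα.indep.injective hik)
    · rw [range_update_insert, ← hi, Set.image_insert_eq, h]

lemma image_mul {D : Set V} {u v : V ≃ₗᵢ[ℝ] V} (hu : ⇑u '' D = D) (hv : ⇑v '' D = D) :
    ⇑(u * v) '' D = D := by
  rw [LinearIsometryEquiv.coe_mul, Set.image_comp, hv, hu]

lemma image_inv {D : Set V} {u : V ≃ₗᵢ[ℝ] V} (hu : ⇑u '' D = D) : ⇑u⁻¹ '' D = D := by
  conv_lhs => rw [← hu]
  rw [← Set.image_comp, ← LinearIsometryEquiv.coe_mul, inv_mul_cancel]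
  simp

end Helpers

theorem statement_4
    {V : Type*} [NormedAddCommGroup V] [InnerProductSpace ℝ V] [FiniteDimensional ℝ V]
    (Φ : Set V) (hΦ : IsRootSystem Φ)
    {n : ℕ} (α : Fin n → V) (hα : IsBase Φ α)
    (m : Fin n → ℕ) (α₀ : V) (h₀ : IsHighestRoot Φ α m α₀) :
    ({w : V ≃ₗᵢ[ℝ] V | w ∈ WeylGroup Φ ∧
        ⇑w '' insert (-α₀) (Set.range α) = insert (-α₀) (Set.range α)}
      = {1} ∪ {w : V ≃ₗᵢ[ℝ] V | w ∈ WeylGroup Φ ∧ ∃ j, m j = 1 ∧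
          ⇑w '' Set.range α = Set.range (Function.update α j (-α₀))}) ∧
    (∀ β ∈ insert (-α₀) {x | ∃ j, m j = 1 ∧ x = α j},
      ∀ γ ∈ insert (-α₀) {x | ∃ j, m j = 1 ∧ x = α j},
      ∃! w : V ≃ₗᵢ[ℝ] V, (w ∈ WeylGroup Φ ∧
        ⇑w '' insert (-α₀) (Set.range α) = insert (-α₀) (Set.range α)) ∧
        w β = γ) := by
    -- The orbit of `-α₀` contains every minuscule simple root; the witness for `α j` is `v_j`.
  have hex : ∀ β ∈ insert (-α₀) {x | ∃ j, m j = 1 ∧ x = α j},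
      ∃ u : V ≃ₗᵢ[ℝ] V, (u ∈ WeylGroup Φ ∧
        ⇑u '' insert (-α₀) (Set.range α) = insert (-α₀) (Set.range α)) ∧ u (-α₀) = β := by
    rintro β (rfl | ⟨j, hj, rfl⟩)
    · exact ⟨1, ⟨one_mem _, by simp⟩, rfl⟩
    · obtain ⟨w, hw, hi⟩ := hα.weyl_transitive (h₀.isBase_update hα hΦ hj) hΦ
      have h1 := h₀.map_neg_highest hα hΦ hj hw hi
      exact ⟨w, ⟨hw, IsHighestRoot.image_extended hi h1⟩, h1⟩
  constructor
  · ext w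
    constructor
    · rintro ⟨hw, hi⟩
      have hm : w (-α₀) ∈ insert (-α₀) (Set.range α) :=
        hi ▸ Set.mem_image_of_mem _ (Set.mem_insert _ _)
      rcases hm with hm | ⟨k, hk⟩
      · exact Or.inl (h₀.eq_one hα hΦ hw hi hm)
      · exact Or.inr ⟨hw, k, h₀.minuscule_of_map hα hi hk.symm⟩
    · rintro (rfl | ⟨hw, j, hj, hi⟩)
      · exact ⟨one_mem _, by simp⟩
      · exact ⟨hw, IsHighestRoot.image_extended hi (h₀.map_neg_highest hα hΦ hj hw hi)⟩
  · intro β hβ γ hγ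
    obtain ⟨u, hu, hub⟩ := hex β hβ
    obtain ⟨v, hv, hvc⟩ := hex γ hγ
    have huinv : u⁻¹ β = -α₀ := by
      rw [← hub]
      exact u.symm_apply_apply _
    have hvinv : v⁻¹ γ = -α₀ := by
      rw [← hvc]
      exact v.symm_apply_apply _
    refine ⟨v * u⁻¹, ⟨⟨mul_mem hv.1 (inv_mem hu.1),
      image_mul hv.2 (image_inv hu.2)⟩, ?_⟩, ?_⟩
    · change v (u⁻¹ β) = γ
      rw [huinv, hvc]
    · rintro w ⟨⟨hw, hi⟩, hwb⟩
      -- `v⁻¹ w u` fixes `-α₀`, hence is trivial.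
      have h1 : v⁻¹ * (w * u) = 1 := by
        refine h₀.eq_one hα hΦ (mul_mem (inv_mem hv.1) (mul_mem hw hu.1))
          (image_mul (image_inv hv.2) (image_mul hi hu.2)) ?_
        change v⁻¹ (w (u (-α₀))) = -α₀
        rw [hub, hwb, hvinv]
      rw [inv_mul_eq_one] at h1
      rw [h1, mul_inv_cancel_right]
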